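/- arXiv:1902.01751 — 2 statements merged into one kernel-verified Lean document; each statement's English description precedes it below -/
import Mathlib

section
/- For the weight a = (6,8,15) (the weight of the Z₁₁-singularity), there exist 3×3 matrices C and D with non-negative integer entries such that |det D| = 1, B_a = C·D, (6,8,15) = (1,1,1)·D, f_C(x,y,z) = x³ + xy⁵ + z² after a permutation of the variables (x,y,z) (the normal form of the strange dual singularity E₁₃), and f_C has an isolated critical point at the origin of ℂ³ (all partial derivatives of f_C vanish at 0, and there is a punctured neighborhood of 0 containing no critical point of f_C). -/
open Matrix BigOperators

noncomputable section

/-- `f_C(x,y,z) = Σ_{i=1}^{3} x^{c_{i1}} y^{c_{i2}} z^{c_{i3}}` for a 3×3 matrix `C`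
with non-negative integer entries. -/
def fC (C : Matrix (Fin 3) (Fin 3) ℕ) : (Fin 3 → ℂ) → ℂ :=
  fun v => ∑ i : Fin 3, ∏ j : Fin 3, v j ^ C i j

/-- `φ_D(u₁,u₂,u₃) = (u₁^{d_{i1}} u₂^{d_{i2}} u₃^{d_{i3}})_{i=1}^{3}`. -/
def phiD (D : Matrix (Fin 3) (Fin 3) ℕ) : (Fin 3 → ℂ) → (Fin 3 → ℂ) :=
  fun u i => ∏ j : Fin 3, u j ^ D i j

/-- The matrix `B_a` with rows `(a₁+1,a₂,a₃)`, `(a₁,a₂+1,a₃)`, `(a₁,a₂,a₃+1)`. -/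
def Bmat (a : Fin 3 → ℕ) : Matrix (Fin 3) (Fin 3) ℕ :=
  fun i j => a j + if i = j then 1 else 0

/-- `G_a(u₁,u₂,u₃) = u₁^{a₁+1}u₂^{a₂}u₃^{a₃} + u₁^{a₁}u₂^{a₂+1}u₃^{a₃} + u₁^{a₁}u₂^{a₂}u₃^{a₃+1}`. -/
def Ga (a : Fin 3 → ℕ) : (Fin 3 → ℂ) → ℂ :=
  fun u => u 0 ^ (a 0 + 1) * u 1 ^ a 1 * u 2 ^ a 2
         + u 0 ^ a 0 * u 1 ^ (a 1 + 1) * u 2 ^ a 2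
         + u 0 ^ a 0 * u 1 ^ a 1 * u 2 ^ (a 2 + 1)

/-- `H_a(u₁,u₂,u₃) = u₁^{a₁}u₂^{a₂}u₃^{a₃}`. -/
def Ha (a : Fin 3 → ℕ) : (Fin 3 → ℂ) → ℂ :=
  fun u => u 0 ^ a 0 * u 1 ^ a 1 * u 2 ^ a 2

/-- Determinant of a matrix of natural numbers, computed over `ℤ`. -/
def detZ (M : Matrix (Fin 3) (Fin 3) ℕ) : ℤ :=
  (M.map (fun n : ℕ => (n : ℤ))).det

/-- `f` has an isolated critical point at the origin of `ℂ³`: the derivative of `f`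
vanishes at `0`, and there is a punctured neighborhood of `0` containing no critical
point of `f`. -/
def IsolatedCriticalAtZero (f : (Fin 3 → ℂ) → ℂ) : Prop :=
  fderiv ℂ f 0 = 0 ∧
  ∃ ε : ℝ, ε > 0 ∧ ∀ p : Fin 3 → ℂ, p ≠ 0 → ‖p‖ < ε → fderiv ℂ f p ≠ 0

section Pi

open ContinuousLinearMap (proj)

variable {ι : Type*} [Fintype ι]

lemma sum_smul_proj_eq_zero_iff {R : Type*} [CommSemiring R] [TopologicalSpace R]
    [IsTopologicalSemiring R] {g : ι → R} :
    ∑ j, g j • proj (R := R) (φ := fun _ : ι => R) j = 0 ↔ g = 0 := by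
  classical
  refine ⟨fun h => funext fun j => ?_, fun h => by ext; simp [h]⟩
  simpa [Pi.single_apply] using DFunLike.congr_fun h (Pi.single j 1)

lemma hasFDerivAt_prod_pow {𝕜 : Type*} [NontriviallyNormedField 𝕜] [DecidableEq ι]
    (n : ι → ℕ) (v : ι → 𝕜) :
    HasFDerivAt (fun u : ι → 𝕜 => ∏ j, u j ^ n j)
      (∑ j, (n j * v j ^ (n j - 1) * ∏ k ∈ Finset.univ.erase j, v k ^ n k) •
        proj (R := 𝕜) (φ := fun _ : ι => 𝕜) j) v := by
  have hpow (j : ι) := (hasFDerivAt_apply (𝕜 := 𝕜) j v).pow (n j)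
  refine (HasFDerivAt.finsetProd fun j _ => hpow j).congr_fderiv ?_
  refine Finset.sum_congr rfl fun j _ => ?_
  rw [smul_smul, nsmul_eq_mul, mul_comm]

end Pi

/-- The gradient of `fC C`: its `j`-th entry is the formal partial derivative of `f_C` in the
`j`-th variable. The truncated exponent `C i j - 1` is harmless, being multiplied by `C i j`. -/
def gradFC (C : Matrix (Fin 3) (Fin 3) ℕ) (v : Fin 3 → ℂ) : Fin 3 → ℂ :=
  fun j => ∑ i, C i j * v j ^ (C i j - 1) * ∏ k ∈ Finset.univ.erase j, v k ^ C i k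

lemma hasFDerivAt_fC (C : Matrix (Fin 3) (Fin 3) ℕ) (v : Fin 3 → ℂ) :
    HasFDerivAt (fC C)
      (∑ j, gradFC C v j • ContinuousLinearMap.proj (R := ℂ) (φ := fun _ : Fin 3 => ℂ) j) v := by
  refine (HasFDerivAt.fun_sum fun i _ => hasFDerivAt_prod_pow (C i) v).congr_fderiv ?_
  ext w
  simpa [gradFC, Finset.sum_mul] using Finset.sum_comm

lemma fderiv_fC_eq_zero_iff {C : Matrix (Fin 3) (Fin 3) ℕ} {v : Fin 3 → ℂ} :
    fderiv ℂ (fC C) v = 0 ↔ gradFC C v = 0 := by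
  rw [(hasFDerivAt_fC C v).fderiv, sum_smul_proj_eq_zero_iff]

lemma isolatedCriticalAtZero_of_fderiv_eq_zero_iff {f : (Fin 3 → ℂ) → ℂ}
    (hf : ∀ p, fderiv ℂ f p = 0 ↔ p = 0) : IsolatedCriticalAtZero f :=
  ⟨(hf 0).2 rfl, 1, one_pos, fun p hp _ => (hf p).not.2 hp⟩

/-- The exponent matrix of `x y ^ b + x ^ a + z ^ c`, an invertible polynomial of chain type in
`x, y` plus a Fermat term in `z`; the singularity `E₁₃` is the case `(a, b, c) = (3, 5, 2)`. -/
def chainFermat (a b c : ℕ) : Matrix (Fin 3) (Fin 3) ℕ :=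
  !![1, b, 0; a, 0, 0; 0, 0, c]

lemma fC_chainFermat (a b c : ℕ) (v : Fin 3 → ℂ) :
    fC (chainFermat a b c) v = v 0 * v 1 ^ b + v 0 ^ a + v 2 ^ c := by
  simp [fC, chainFermat, Fin.sum_univ_three, Fin.prod_univ_three]

lemma gradFC_chainFermat (a b c : ℕ) (v : Fin 3 → ℂ) :
    gradFC (chainFermat a b c) v =
      ![v 1 ^ b + a * v 0 ^ (a - 1), b * v 1 ^ (b - 1) * v 0, c * v 2 ^ (c - 1)] := by
  have erase_zero : Finset.univ.erase (0 : Fin 3) = {1, 2} := by decide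
  have erase_one : Finset.univ.erase (1 : Fin 3) = {0, 2} := by decide
  have erase_two : Finset.univ.erase (2 : Fin 3) = {0, 1} := by decide
  ext j
  fin_cases j <;>
    simp [gradFC, chainFermat, Fin.sum_univ_three, erase_zero, erase_one, erase_two]

lemma gradFC_chainFermat_eq_zero_iff {a b c : ℕ} (ha : 2 ≤ a) (hb : b ≠ 0) (hc : 2 ≤ c)
    {v : Fin 3 → ℂ} :
    gradFC (chainFermat a b c) v = 0 ↔ v = 0 := by
  have ha₀ : a ≠ 0 := by lia
  have ha₁ : a - 1 ≠ 0 := by lia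
  have hc₀ : c ≠ 0 := by lia
  have hc₁ : c - 1 ≠ 0 := by lia
  rw [gradFC_chainFermat]
  refine ⟨fun h => ?_, fun h => by simp [h, ha₁, hb, hc₁]⟩
  obtain ⟨hx, hy, hz⟩ : v 1 ^ b + a * v 0 ^ (a - 1) = 0 ∧
      (v 1 = 0 ∧ b - 1 ≠ 0 ∨ v 0 = 0) ∧ v 2 = 0 := by
    simpa [hb, hc₀, hc₁] using h
  have hv₀ : v 0 = 0 := by
    rcases hy with ⟨hv₁, -⟩ | hv₀
    · simpa [hv₁, hb, ha₀, ha₁] using hx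
    · exact hv₀
  have hv₁ : v 1 = 0 := by simpa [hv₀, ha₁, hb] using hx
  ext j
  fin_cases j <;> assumption

lemma isolatedCriticalAtZero_fC_chainFermat {a b c : ℕ} (ha : 2 ≤ a) (hb : b ≠ 0) (hc : 2 ≤ c) :
    IsolatedCriticalAtZero (fC (chainFermat a b c)) :=
  isolatedCriticalAtZero_of_fderiv_eq_zero_iff fun _ =>
    fderiv_fC_eq_zero_iff.trans (gradFC_chainFermat_eq_zero_iff ha hb hc)

theorem stmt_9 :
    ∃ C D : Matrix (Fin 3) (Fin 3) ℕ,
      |detZ D| = 1 ∧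
      Bmat ![6, 8, 15] = C * D ∧
      (∀ j, (∑ i : Fin 3, D i j) = ![6, 8, 15] j) ∧
      (∃ σ : Equiv.Perm (Fin 3),
        ∀ x y z : ℂ, fC C (fun i => ![x, y, z] (σ i)) = x ^ 3 + x * y ^ 5 + z ^ 2) ∧
      IsolatedCriticalAtZero (fC C) := by
  -- Only the row `(6, 9, 15)` of `B_a` is divisible by `3` and only `(6, 8, 16)` by `2`, so these
  -- rows carry `x ^ 3` and `z ^ 2`; the remaining one carries `x y ^ 5`. Then `D = C⁻¹ B_a`.
  refine ⟨chainFermat 3 5 2, !![2, 3, 5; 1, 1, 2; 3, 4, 8], ?det, ?factorization, ?columnSums,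
    ⟨1, fun x y z => ?normalForm⟩,
    isolatedCriticalAtZero_fC_chainFermat (by norm_num) (by norm_num) le_rfl⟩
  case det => simp [detZ, det_fin_three]
  case factorization => decide
  case columnSums => decide
  case normalForm =>
    calc fC (chainFermat 3 5 2) ![x, y, z] = x * y ^ 5 + x ^ 3 + z ^ 2 := fC_chainFermat 3 5 2 _
      _ = x ^ 3 + x * y ^ 5 + z ^ 2 := by ring
end
end

section
/- For the weight a = (4,6,11) (the weight of the Z₁₂-singularity), there exist 3×3 matrices C and D with non-negative integer entries such that |det D| = 1, B_a = C·D, (4,6,11) = (1,1,1)·D, f_C(x,y,z) = x³y + xy⁴ + z² after a permutation of the variables (x,y,z) (Z₁₂ is self-dual under strange duality), and f_C has an isolated critical point at the origin of ℂ³ (all partial derivatives of f_C vanish at 0, and there is a punctured neighborhood of 0 containing no critical point of f_C). -/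
open Matrix BigOperators

noncomputable section

/-!
Let `J` be the all-ones matrix. If the columns of `D` sum to `a`, then `B_a = 1 + J * D`, so
`B_a = C * D` says exactly that `(C - J) * D = 1`. Hence `D` is the inverse of `C - J` and
unimodular.

For the isolated critical point, Euler's identity `p_k ∂_k f_C (p) = ∑ i, m_i (p) * C i k`, where
`m_i` are the monomials of `f_C`, shows that all `m_i` vanish at a critical point once
`det C ≠ 0`. For `x ^ a * y + x * y ^ b + z ^ c` this forces `z = 0` and `x * y = 0`, and then the
partial derivatives, restricted to the axes of the plane `z = 0`, leave only the origin.
-/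

lemma abs_detZ_eq_one_of_Bmat_eq_mul {a : Fin 3 → ℕ} {C D : Matrix (Fin 3) (Fin 3) ℕ}
    (hB : Bmat a = C * D) (hsum : ∀ j, ∑ i, D i j = a j) : |detZ D| = 1 := by
  have hinv : (C.map (fun n : ℕ => (n : ℤ)) - Matrix.of fun _ _ => 1) *
      D.map (fun n : ℕ => (n : ℤ)) = 1 := by
    ext i j
    have hB' : (∑ k, (C i k : ℤ) * D k j) = a j + if i = j then 1 else 0 := by
      exact_mod_cast (congrFun₂ hB i j).symm
    have hsum' : (∑ k, (D k j : ℤ)) = a j := mod_cast hsum j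
    simp [sub_mul, Matrix.mul_apply, hB', hsum', Matrix.one_apply]
  have hdet := congrArg Matrix.det hinv
  rw [Matrix.det_mul, Matrix.det_one] at hdet
  exact Int.isUnit_iff_abs_eq.mp (.of_mul_eq_one_right _ hdet)

lemma fderiv_fC_single (C : Matrix (Fin 3) (Fin 3) ℕ) (p : Fin 3 → ℂ) (k : Fin 3) :
    fderiv ℂ (fC C) p (Pi.single k 1) =
      ∑ i, (∏ j ∈ Finset.univ.erase k, p j ^ C i j) * (C i k * p k ^ (C i k - 1)) := by
  have hderiv : HasFDerivAt (fC C) _ p :=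
    HasFDerivAt.fun_sum fun i _ => HasFDerivAt.finsetProd fun j _ =>
      (hasFDerivAt_apply (𝕜 := ℂ) j p).pow (C i j)
  simp [hderiv.fderiv, Pi.single_apply]

lemma mul_fderiv_fC_single (C : Matrix (Fin 3) (Fin 3) ℕ) (p : Fin 3 → ℂ) (k : Fin 3) :
    p k * fderiv ℂ (fC C) p (Pi.single k 1) = ∑ i, phiD C p i * C i k := by
  rw [fderiv_fC_single, Finset.mul_sum]
  refine Finset.sum_congr rfl fun i _ => ?_
  have hpow : p k * (C i k * p k ^ (C i k - 1)) = p k ^ C i k * C i k := by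
    rcases eq_or_ne (C i k) 0 with h | h
    · simp [h]
    · rw [mul_left_comm, mul_pow_sub_one h, mul_comm]
  rw [mul_left_comm, hpow, ← mul_assoc, Finset.prod_erase_mul _ _ (Finset.mem_univ k), phiD]

lemma phiD_eq_zero_of_fderiv_fC_eq_zero {C : Matrix (Fin 3) (Fin 3) ℕ} (hC : detZ C ≠ 0)
    {p : Fin 3 → ℂ} (hp : fderiv ℂ (fC C) p = 0) : phiD C p = 0 := by
  have hdet : (C.map (fun n : ℕ => (n : ℂ))).det = detZ C := by
    simp [detZ, Matrix.det_fin_three]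
  refine Matrix.eq_zero_of_vecMul_eq_zero (M := C.map (fun n : ℕ => (n : ℂ))) ?_ ?_
  · rw [hdet]
    exact_mod_cast hC
  · ext k
    simpa [hp, Matrix.vecMul, dotProduct] using (mul_fderiv_fC_single C p k).symm

lemma fderiv_fC_zero {C : Matrix (Fin 3) (Fin 3) ℕ} (hC : ∀ i, 2 ≤ ∑ j, C i j) :
    fderiv ℂ (fC C) 0 = 0 := by
  refine ContinuousLinearMap.coe_injective (LinearMap.pi_ext' fun k => LinearMap.ext_ring ?_)
  refine (fderiv_fC_single C 0 k).trans (Finset.sum_eq_zero fun i _ => ?_)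
  obtain hzero | hone | htwo : C i k = 0 ∨ C i k = 1 ∨ 2 ≤ C i k := by omega
  · simp [hzero]
  · have hrest : ∑ j ∈ Finset.univ.erase k, C i j ≠ 0 := by
      have := Finset.sum_erase_add _ (C i) (Finset.mem_univ k)
      have := hC i
      omega
    obtain ⟨j, hj, hij⟩ := Finset.exists_ne_zero_of_sum_ne_zero hrest
    rw [Finset.prod_eq_zero hj (zero_pow hij), zero_mul]
  · simp [show C i k - 1 ≠ 0 by omega]

/-- The exponent matrix of the invertible polynomial `x ^ a * y + x * y ^ b + z ^ c`, whose part in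
`x` and `y` is of loop type. -/
def loopMatrix (a b c : ℕ) : Matrix (Fin 3) (Fin 3) ℕ := !![a, 1, 0; 1, b, 0; 0, 0, c]

lemma fC_loopMatrix (a b c : ℕ) (p : Fin 3 → ℂ) :
    fC (loopMatrix a b c) p = p 0 ^ a * p 1 + p 0 * p 1 ^ b + p 2 ^ c := by
  simp [fC, loopMatrix, Fin.sum_univ_three, Fin.prod_univ_three]

lemma detZ_loopMatrix (a b c : ℕ) : detZ (loopMatrix a b c) = (a * b - 1) * c := by
  simp [detZ, loopMatrix, Matrix.det_fin_three, sub_mul]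

lemma fderiv_fC_loopMatrix_single_zero (a b c : ℕ) (p : Fin 3 → ℂ) :
    fderiv ℂ (fC (loopMatrix a b c)) p (Pi.single 0 1) =
      p 1 * (a * p 0 ^ (a - 1)) + p 1 ^ b := by
  have herase : Finset.univ.erase (0 : Fin 3) = {1, 2} := by decide
  simp [fderiv_fC_single, loopMatrix, Fin.sum_univ_three, herase]

lemma fderiv_fC_loopMatrix_single_one (a b c : ℕ) (p : Fin 3 → ℂ) :
    fderiv ℂ (fC (loopMatrix a b c)) p (Pi.single 1 1) =
      p 0 ^ a + p 0 * (b * p 1 ^ (b - 1)) := by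
  have herase : Finset.univ.erase (1 : Fin 3) = {0, 2} := by decide
  simp [fderiv_fC_single, loopMatrix, Fin.sum_univ_three, herase]

lemma eq_zero_of_fderiv_fC_loopMatrix_eq_zero {a b c : ℕ} (ha : 2 ≤ a) (hb : 2 ≤ b) (hc : c ≠ 0)
    {p : Fin 3 → ℂ} (hp : fderiv ℂ (fC (loopMatrix a b c)) p = 0) : p = 0 := by
  have hdet : detZ (loopMatrix a b c) ≠ 0 := by
    rw [detZ_loopMatrix]
    exact mul_ne_zero (by nlinarith) (mod_cast hc)
  have hmonomial := phiD_eq_zero_of_fderiv_fC_eq_zero hdet hp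
  have hz : p 2 = 0 := by
    simpa [phiD, loopMatrix, Fin.prod_univ_three, hc] using congrFun hmonomial 2
  have hxy : p 0 = 0 ∨ p 1 = 0 := by
    simpa [phiD, loopMatrix, Fin.prod_univ_three, show a ≠ 0 by omega] using congrFun hmonomial 0
  have hdx : p 1 * (a * p 0 ^ (a - 1)) + p 1 ^ b = 0 := by
    simp [← fderiv_fC_loopMatrix_single_zero a b c, hp]
  have hdy : p 0 ^ a + p 0 * (b * p 1 ^ (b - 1)) = 0 := by
    simp [← fderiv_fC_loopMatrix_single_one a b c, hp]
  have hx : p 0 = 0 := hxy.elim id fun h => by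
    simpa [h, show a ≠ 0 by omega, show b - 1 ≠ 0 by omega] using hdy
  have hy : p 1 = 0 := hxy.symm.elim id fun h => by
    simpa [h, show b ≠ 0 by omega, show a - 1 ≠ 0 by omega] using hdx
  ext k
  fin_cases k <;> assumption

lemma isolatedCriticalAtZero_fC_loopMatrix {a b c : ℕ} (ha : 2 ≤ a) (hb : 2 ≤ b) (hc : 2 ≤ c) :
    IsolatedCriticalAtZero (fC (loopMatrix a b c)) := by
  have hdegree : ∀ i, 2 ≤ ∑ j, loopMatrix a b c i j := by
    simpa [Fin.forall_fin_succ, Fin.sum_univ_three, loopMatrix] using ⟨by omega, by omega, hc⟩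
  exact ⟨fderiv_fC_zero hdegree, 1, one_pos, fun _ hne _ hcrit =>
    hne (eq_zero_of_fderiv_fC_loopMatrix_eq_zero ha hb (by omega) hcrit)⟩

theorem stmt_10 :
    ∃ C D : Matrix (Fin 3) (Fin 3) ℕ,
      |detZ D| = 1 ∧
      Bmat ![4, 6, 11] = C * D ∧
      (∀ j, (∑ i : Fin 3, D i j) = ![4, 6, 11] j) ∧
      (∃ σ : Equiv.Perm (Fin 3),
        ∀ x y z : ℂ, fC C (fun i => ![x, y, z] (σ i)) = x ^ 3 * y + x * y ^ 4 + z ^ 2) ∧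
      IsolatedCriticalAtZero (fC C) := by
  -- `D` is the inverse of `loopMatrix 4 3 2 - J`.
  let D : Matrix (Fin 3) (Fin 3) ℕ := !![1, 1, 2; 1, 2, 3; 2, 3, 6]
  have hB : Bmat ![4, 6, 11] = loopMatrix 4 3 2 * D := by decide
  have hsum : ∀ j, ∑ i, D i j = ![4, 6, 11] j := by decide
  have hdual (x y z : ℂ) : fC (loopMatrix 4 3 2) (fun i => ![x, y, z] (Equiv.swap 0 1 i)) =
      x ^ 3 * y + x * y ^ 4 + z ^ 2 := by
    have hfix : Equiv.swap (0 : Fin 3) 1 2 = 2 := by decide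
    simp only [fC_loopMatrix, Equiv.swap_apply_left, Equiv.swap_apply_right, hfix, Matrix.cons_val]
    ring
  exact ⟨loopMatrix 4 3 2, D, abs_detZ_eq_one_of_Bmat_eq_mul hB hsum, hB, hsum,
    ⟨Equiv.swap 0 1, hdual⟩,
    isolatedCriticalAtZero_fC_loopMatrix (by norm_num) (by norm_num) le_rfl⟩
end
end
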